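/- Let N₁ : ℝ → ℝ satisfy N₁(G) ≥ 2 for all large G and ∫₂^{N₁(G)} (−P(t)) dt = a·G + O(1) as G → ∞. Let g : ℝ → ℝ satisfy g(T) − T ∼ (1−c)·T/ln T as T → ∞, and assume the prime number theorem in the form π(τ) ∼ τ/ln τ as τ → ∞. Then ∫_{N₁(τ/(a(1−c)))}^{N₁(g(τ/(a(1−c))))} (−P(t)) dt ∼ π(τ) as τ → ∞; that is, this parametric family of increments of Ingham's integral realizes an asymptotic mapping of −P(t) onto the prime-counting function π(t). -/

import Mathlib

/-!
Let `F G = ∫₂^{N₁ G} (-P)`, so that `F G = a G + O(1)`. Along any `x, y → ∞` whose difference is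
asymptotic to some `w → ∞`, the linear term dominates: `F y - F x = a (y - x) + O(1) ∼ a w`.
Take `x = τ / K` with `K = a (1 - c)` and `y = g x`. The difference is then asymptotic to
`w = (1 - c) x / log x`, and `a w = τ / log (τ / K) ∼ τ / log τ ∼ π(τ)`.
-/

open Filter Real Asymptotics MeasureTheory

noncomputable def pichar (t : ℝ) : ℝ := (Nat.primeCounting ⌊t⌋₊ : ℝ)

noncomputable def P (t : ℝ) : ℝ := pichar t - ∫ u in (2:ℝ)..t, 1 / Real.log u

noncomputable def a : ℝ := Real.exp 4.5

noncomputable def c : ℝ := Real.eulerMascheroniConstant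

noncomputable def Z (t : ℝ) : ℝ := ‖riemannZeta (1/2 + (t : ℂ) * Complex.I)‖ ^ 2

section AsymptoticIncrements

variable {ι : Type*} {l : Filter ι} {x y w : ι → ℝ}

lemma tendsto_atTop_of_sub_isEquivalent (hx : Tendsto x l atTop) (hw : Tendsto w l atTop)
    (hxy : (fun i ↦ y i - x i) ~[l] w) : Tendsto y l atTop := by
  simpa only [sub_add_cancel] using (hxy.symm.tendsto_atTop hw).atTop_add_atTop hx

lemma sub_comp_isEquivalent_const_mul {F : ℝ → ℝ} {α : ℝ} (hα : α ≠ 0)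
    (hF : (fun G ↦ F G - α * G) =O[atTop] (fun _ ↦ (1 : ℝ)))
    (hx : Tendsto x l atTop) (hw : Tendsto w l atTop) (hxy : (fun i ↦ y i - x i) ~[l] w) :
    (fun i ↦ F (y i) - F (x i)) ~[l] (fun i ↦ α * w i) := by
  have hy : Tendsto y l atTop := tendsto_atTop_of_sub_isEquivalent hx hw hxy
  have linear_part : (fun i ↦ α * (y i - x i)) ~[l] (fun i ↦ α * w i) :=
    (IsEquivalent.refl (u := fun _ ↦ α)).mul hxy
  have error_bounded :
      (fun i ↦ (F (y i) - α * y i) - (F (x i) - α * x i)) =O[l] (fun _ ↦ (1 : ℝ)) :=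
    (hF.comp_tendsto hy).sub (hF.comp_tendsto hx)
  have one_isLittleO : (fun _ ↦ (1 : ℝ)) =o[l] (fun i ↦ α * w i) :=
    (isLittleO_const_left.2 (Or.inr (tendsto_norm_atTop_atTop.comp hw))).const_mul_right hα
  refine (linear_part.add_isLittleO (error_bounded.trans_isLittleO one_isLittleO)).congr_left ?_
  filter_upwards with i
  simp only [Pi.add_apply]
  ring

lemma integral_increment_isEquivalent_const_mul {f N : ℝ → ℝ} {μ : Measure ℝ} {b α : ℝ}
    (hα : α ≠ 0) (hf : ∀ᶠ G in atTop, IntervalIntegrable f μ b (N G))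
    (hN : (fun G ↦ (∫ t in b..N G, f t ∂μ) - α * G) =O[atTop] (fun _ ↦ (1 : ℝ)))
    (hx : Tendsto x l atTop) (hw : Tendsto w l atTop) (hxy : (fun i ↦ y i - x i) ~[l] w) :
    (fun i ↦ ∫ t in N (x i)..N (y i), f t ∂μ) ~[l] (fun i ↦ α * w i) := by
  have hy : Tendsto y l atTop := tendsto_atTop_of_sub_isEquivalent hx hw hxy
  refine (sub_comp_isEquivalent_const_mul hα hN hx hw hxy).congr_left ?_
  filter_upwards [hx.eventually hf, hy.eventually hf] with i hfx hfy
  exact intervalIntegral.integral_interval_sub_left hfy hfx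

end AsymptoticIncrements

lemma tendsto_div_log_atTop : Tendsto (fun x : ℝ ↦ x / log x) atTop atTop := by
  have log_div_tendsto_zero : Tendsto (fun x : ℝ ↦ log x / x) atTop (nhdsWithin 0 (Set.Ioi 0)) := by
    refine tendsto_nhdsWithin_iff.2 ⟨isLittleO_log_id_atTop.tendsto_div_nhds_zero, ?_⟩
    filter_upwards [eventually_gt_atTop 1] with x hx
    exact div_pos (log_pos hx) (by linarith)
  exact log_div_tendsto_zero.inv_tendsto_nhdsGT_zero.congr fun x ↦ inv_div (log x) x

lemma log_div_const_isEquivalent_log {K : ℝ} (hK : K ≠ 0) :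
    (fun τ ↦ log (τ / K)) ~[atTop] log := by
  refine (IsEquivalent.refl.sub_isLittleO (isLittleO_const_log_atTop (c := log K))).congr_left ?_
  filter_upwards [eventually_ne_atTop 0] with τ hτ
  exact (log_div hτ hK).symm

theorem integral_increment_isEquivalent_div_log {f N g : ℝ → ℝ} {μ : Measure ℝ} {b α κ : ℝ}
    (hα : 0 < α) (hκ : 0 < κ) (hf : ∀ᶠ G in atTop, IntervalIntegrable f μ b (N G))
    (hN : (fun G ↦ (∫ t in b..N G, f t ∂μ) - α * G) =O[atTop] (fun _ ↦ (1 : ℝ)))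
    (hg : (fun T ↦ g T - T) ~[atTop] (fun T ↦ κ * T / log T)) :
    (fun τ ↦ ∫ t in N (τ / (α * κ))..N (g (τ / (α * κ))), f t ∂μ)
      ~[atTop] (fun τ ↦ τ / log τ) := by
  have hT : Tendsto (fun τ : ℝ ↦ τ / (α * κ)) atTop atTop :=
    tendsto_id.atTop_div_const (mul_pos hα hκ)
  have hw : Tendsto (fun T : ℝ ↦ κ * T / log T) atTop atTop := by
    simpa only [mul_div_assoc] using tendsto_div_log_atTop.const_mul_atTop hκ
  calc (fun τ ↦ ∫ t in N (τ / (α * κ))..N (g (τ / (α * κ))), f t ∂μ)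
      ~[atTop] (fun τ ↦ α * (κ * (τ / (α * κ)) / log (τ / (α * κ)))) :=
        integral_increment_isEquivalent_const_mul hα.ne' hf hN hT (hw.comp hT)
          (hg.comp_tendsto hT)
    _ = (fun τ ↦ τ / log (τ / (α * κ))) := by
        funext τ
        rw [← mul_div_assoc, ← mul_assoc, mul_div_cancel₀ _ (mul_pos hα hκ).ne']
    _ ~[atTop] (fun τ ↦ τ / log τ) :=
        IsEquivalent.refl.div (log_div_const_isEquivalent_log (mul_pos hα hκ).ne')

lemma monotone_pichar : Monotone pichar := fun _ _ h ↦
  Nat.cast_le.2 (Nat.monotone_primeCounting (Nat.floor_mono h))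

lemma intervalIntegrable_one_div_log {x y : ℝ} (hx : 1 < x) (hy : 1 < y) :
    IntervalIntegrable (fun u ↦ 1 / log u) volume x y := by
  refine ContinuousOn.intervalIntegrable fun u hu ↦ ContinuousAt.continuousWithinAt ?_
  have hu : 1 < u := (lt_min hx hy).trans_le hu.1
  exact continuousAt_const.div (continuousAt_log (by linarith)) (log_pos hu).ne'

lemma intervalIntegrable_P {x y : ℝ} (hx : 1 < x) (hy : 1 < y) :
    IntervalIntegrable P volume x y := by
  have integrable_from_two {z : ℝ} (hz : 1 < z) : IntervalIntegrable P volume 2 z :=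
    monotone_pichar.intervalIntegrable.sub
      (intervalIntegral.continuousOn_primitive_interval'
        (intervalIntegrable_one_div_log one_lt_two hz) Set.left_mem_uIcc).intervalIntegrable
  exact (integrable_from_two hx).symm.trans (integrable_from_two hy)

lemma a_pos : 0 < a := exp_pos _

lemma c_lt_one : c < 1 := eulerMascheroniConstant_lt_two_thirds.trans (by norm_num)

/-- Theorem 4: the asymptotic mapping `-P(t) → π(t)`:
`∫_{N₁(τ/(a(1-c)))}^{N₁(g(τ/(a(1-c))))} (-P) ∼ π(τ)`. -/
theorem stmt_11 (N₁ : ℝ → ℝ)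
    (hN2 : ∀ᶠ G in atTop, 2 ≤ N₁ G)
    (hN : (fun G => (∫ t in (2:ℝ)..N₁ G, -P t) - a * G) =O[atTop] (fun _ => (1:ℝ)))
    (g : ℝ → ℝ)
    (hg1 : (fun T => g T - T) ~[atTop] (fun T => (1 - c) * T / Real.log T))
    (hPNT : (fun τ => pichar τ) ~[atTop] (fun τ => τ / Real.log τ)) :
    (fun τ => ∫ t in N₁ (τ / (a * (1 - c)))..N₁ (g (τ / (a * (1 - c)))), -P t)
      ~[atTop] (fun τ => pichar τ) := by
  have integrable_neg_P : ∀ᶠ G in atTop, IntervalIntegrable (fun t ↦ -P t) volume 2 (N₁ G) := by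
    filter_upwards [hN2] with G hG
    exact (intervalIntegrable_P one_lt_two (one_lt_two.trans_le hG)).neg
  have increment_isEquivalent :=
    integral_increment_isEquivalent_div_log a_pos (sub_pos.2 c_lt_one) integrable_neg_P hN hg1
  exact increment_isEquivalent.trans hPNT.symm
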